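/- arXiv:2407.13762 — 3 statements merged into one kernel-verified Lean document; each statement's English description precedes it below -/
import Mathlib

section
/- Let n ≥ 2 and let θ : [0,∞) → 𝒳ₙ be continuous with multiradial Dirichlet energy J(θ) = 0. Then there exist ζ ∈ ℝ and a constant C ≥ 0 such that |θ^j_t − (ζ + (j−1)·2π/n)| ≤ C·e^{−nt} for all t ≥ 0 and all j ∈ {1,…,n}; in particular θ_t converges as t → ∞ to the static equally spaced configuration (ζ, ζ + 2π/n, …, ζ + (n−1)·2π/n), exponentially fast with exponential rate n. -/
/-!
A curve of zero energy is an integral curve of the vector field `2φ`. On `(0, π)` the function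
`cot x + x` is decreasing, so for the difference `d = θ - η` of two such curves each pair
`{j, k}` contributes at most `-(d j - d k)²` to `∑ j, d j * d' j`; summing over the pairs shows that
`2φ` is one-sided Lipschitz with constant `-n` in the directions of mean zero. By antisymmetry of
the cotangent `∑ j, φ j = 0`, so the barycentre is conserved and two integral curves with the same
barycentre approach each other at rate `exp (-n t)`. The equally spaced configurations are
stationary, and exactly one of them has the barycentre of `θ 0`.
-/

open MeasureTheory Filter Set
open scoped Real Topology ENNReal Classical

noncomputable section

/-- The configuration space `𝒳ₙ` of `n` ordered points on (a lift of) the circle: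
`θ¹ < θ² < ⋯ < θⁿ < θ¹ + 2π`. -/
def Xspace (n : ℕ) : Set (Fin n → ℝ) :=
  {x | StrictMono x ∧ ∀ i j : Fin n, x i < x j + 2 * π}

/-- The value `θ^{j+1}`, with the convention `θ^{n+1} = θ¹ + 2π`. -/
def nextVal {n : ℕ} (x : Fin n → ℝ) (j : Fin n) : ℝ :=
  if h : (j : ℕ) + 1 < n then x ⟨(j : ℕ) + 1, h⟩ else x ⟨0, j.pos⟩ + 2 * π

/-- The gap `θ^{j+1} - θ^j` (with wrap-around convention). -/
def gap {n : ℕ} (x : Fin n → ℝ) (j : Fin n) : ℝ := nextVal x j - x j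

/-- The minimal gap `Δ(θ) = min_j (θ^{j+1} - θ^j)`. -/
def minGap {n : ℕ} (x : Fin n → ℝ) : ℝ := ⨅ j : Fin n, gap x j

/-- `d(θ) := max_j |2π/n - (θ^{j+1} - θ^j)|`. -/
def dGap {n : ℕ} (x : Fin n → ℝ) : ℝ := ⨆ j : Fin n, |2 * π / n - gap x j|

/-- `φ^j(θ) = ∑_{k ≠ j} cot((θ^j - θ^k)/2)`. -/
def phi {n : ℕ} (x : Fin n → ℝ) (j : Fin n) : ℝ :=
  ∑ k ∈ Finset.univ.erase j, Real.cot ((x j - x k) / 2)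

/-- `φ_a^j := (a/4) φ^j`. -/
def phiA {n : ℕ} (a : ℝ) (x : Fin n → ℝ) (j : Fin n) : ℝ := a / 4 * phi x j

/-- Absolute continuity of every coordinate of `θ` on `[0, T]`: each component is the
integral of a (locally) integrable function. -/
def AbsCont {n : ℕ} (T : ℝ) (θ : ℝ → Fin n → ℝ) : Prop :=
  ∃ v : ℝ → Fin n → ℝ, (∀ j, IntegrableOn (fun s => v s j) (Icc 0 T)) ∧
    ∀ t ∈ Icc (0 : ℝ) T, ∀ j, θ t j = θ 0 j + ∫ s in (0 : ℝ)..t, v s j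

/-- Truncated multiradial Dirichlet energy `J_T(θ)`. -/
def mEnergy (n : ℕ) (T : ℝ) (θ : ℝ → Fin n → ℝ) : ℝ≥0∞ :=
  if AbsCont T θ then
    ENNReal.ofReal (1 / 2) *
      ∫⁻ s in Ioc (0 : ℝ) T,
        ENNReal.ofReal (∑ j, (deriv (fun t => θ t j) s - 2 * phi (θ s) j) ^ 2)
  else ⊤

/-- Multiradial Dirichlet energy `J(θ) = lim_{T→∞} J_T(θ)`, the supremum of the
nondecreasing family `J_T(θ)`. -/
def mEnergyInf (n : ℕ) (θ : ℝ → Fin n → ℝ) : ℝ≥0∞ := ⨆ T : ℝ, mEnergy n T θ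

section Cotangent

lemma cot_odd : Function.Odd Real.cot := fun x => by
  simp only [Real.cot_eq_cos_div_sin, Real.cos_neg, Real.sin_neg, div_neg]

lemma cot_periodic : Function.Periodic Real.cot π := fun x => by
  simp only [Real.cot_eq_cos_div_sin, Real.cos_add_pi, Real.sin_add_pi, neg_div_neg_eq]

lemma hasDerivAt_cot {x : ℝ} (hx : Real.sin x ≠ 0) :
    HasDerivAt Real.cot (-(1 / Real.sin x ^ 2)) x := by
  have hdiv := (Real.hasDerivAt_cos x).fun_div (Real.hasDerivAt_sin x) hx
  rw [← funext Real.cot_eq_cos_div_sin] at hdiv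
  refine hdiv.congr_deriv ?_
  rw [← neg_div, ← Real.sin_sq_add_cos_sq x]
  ring

lemma antitoneOn_cot_add_self : AntitoneOn (fun x => Real.cot x + x) (Ioo 0 π) := by
  have hsin {x : ℝ} (hx : x ∈ Ioo 0 π) : 0 < Real.sin x := Real.sin_pos_of_mem_Ioo hx
  have hderiv {x : ℝ} (hx : x ∈ Ioo 0 π) :
      HasDerivAt (fun x => Real.cot x + x) (-(1 / Real.sin x ^ 2) + 1) x :=
    (hasDerivAt_cot (hsin hx).ne').add (hasDerivAt_id x)
  refine antitoneOn_of_hasDerivWithinAt_nonpos (convex_Ioo 0 π)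
    (fun x hx => (hderiv hx).continuousAt.continuousWithinAt)
    (fun x hx => (hderiv (interior_subset hx)).hasDerivWithinAt) fun x hx => ?_
  have hle : 1 ≤ 1 / Real.sin x ^ 2 := by
    rw [le_div_iff₀ (pow_pos (hsin (interior_subset hx)) 2), one_mul]
    exact Real.sin_sq_le_one x
  linarith

lemma sub_mul_cot_sub_cot_le {x y : ℝ} (hx : x ∈ Ioo 0 π) (hy : y ∈ Ioo 0 π) :
    (x - y) * (Real.cot x - Real.cot y) ≤ -(x - y) ^ 2 := by
  rcases le_total x y with h | h
  · nlinarith [antitoneOn_cot_add_self hx hy h]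
  · nlinarith [antitoneOn_cot_add_self hy hx h]

end Cotangent

section AntisymmetricInteraction

variable {ι R : Type*} [Fintype ι]

lemma two_mul_sum_mul_sum_of_antisymm [NonAssocRing R] {c : ι → ι → R} (hc : ∀ j k, c k j = -c j k)
    (d : ι → R) : 2 * ∑ j, d j * ∑ k, c j k = ∑ j, ∑ k, (d j - d k) * c j k := by
  have hswap : ∑ j, ∑ k, d k * c j k = -∑ j, ∑ k, d j * c j k := by
    rw [Finset.sum_comm]
    simp only [← Finset.sum_neg_distrib, ← mul_neg, ← hc]
  simp only [sub_mul, Finset.sum_sub_distrib, hswap, sub_neg_eq_add, ← two_mul, Finset.mul_sum]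

lemma sum_sum_sub_sq [CommRing R] (d : ι → R) :
    ∑ j, ∑ k, (d j - d k) ^ 2 = 2 * (Fintype.card ι * ∑ j, d j ^ 2 - (∑ j, d j) ^ 2) := by
  calc ∑ j, ∑ k, (d j - d k) ^ 2 = 2 * ∑ j, d j * ∑ k, (d j - d k) := by
        simp only [two_mul_sum_mul_sum_of_antisymm (c := fun j k => d j - d k)
          (fun _ _ => (neg_sub _ _).symm) d, sq]
    _ = 2 * ∑ j, (Fintype.card ι * d j ^ 2 - d j * ∑ k, d k) := by
        refine congrArg (2 * ·) (Finset.sum_congr rfl fun j _ => ?_)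
        rw [Finset.sum_sub_distrib, Finset.sum_const, Finset.card_univ, nsmul_eq_mul]
        ring
    _ = 2 * (Fintype.card ι * ∑ j, d j ^ 2 - (∑ j, d j) ^ 2) := by
        rw [Finset.sum_sub_distrib, ← Finset.mul_sum, ← Finset.sum_mul, sq (∑ j, d j)]

lemma sum_mul_sum_le_of_antisymm [CommRing R] [LinearOrder R] [IsStrictOrderedRing R]
    {c : ι → ι → R} (hc : ∀ j k, c k j = -c j k) {d : ι → R} {κ : R}
    (hd : ∀ j k, (d j - d k) * c j k ≤ -κ * (d j - d k) ^ 2) :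
    ∑ j, d j * ∑ k, c j k ≤ -κ * (Fintype.card ι * ∑ j, d j ^ 2 - (∑ j, d j) ^ 2) := by
  refine le_of_mul_le_mul_left ?_ (two_pos (α := R))
  calc 2 * ∑ j, d j * ∑ k, c j k = ∑ j, ∑ k, (d j - d k) * c j k :=
        two_mul_sum_mul_sum_of_antisymm hc d
    _ ≤ ∑ j, ∑ k, -κ * (d j - d k) ^ 2 :=
        Finset.sum_le_sum fun j _ => Finset.sum_le_sum fun k _ => hd j k
    _ = 2 * (-κ * (Fintype.card ι * ∑ j, d j ^ 2 - (∑ j, d j) ^ 2)) := by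
        simp only [← Finset.mul_sum, sum_sum_sub_sq]
        ring

end AntisymmetricInteraction

section Drift

variable {n : ℕ}

lemma half_sub_mem_Ioo {x : Fin n → ℝ} (hx : x ∈ Xspace n) {j k : Fin n} (h : k < j) :
    (x j - x k) / 2 ∈ Ioo 0 π :=
  ⟨by linarith [hx.1 h], by linarith [hx.2 j k]⟩

/-- The diagonal term is harmless because `Real.cot 0 = 0`. -/
lemma phi_eq_sum_univ (x : Fin n → ℝ) (j : Fin n) :
    phi x j = ∑ k, Real.cot ((x j - x k) / 2) := by
  rw [phi, ← Finset.add_sum_erase _ _ (Finset.mem_univ j), sub_self, zero_div, cot_odd.map_zero,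
    zero_add]

lemma cot_half_sub_antisymm (a b : ℝ) : Real.cot ((b - a) / 2) = -Real.cot ((a - b) / 2) := by
  rw [← cot_odd, ← neg_div, neg_sub]

lemma sum_phi_eq_zero (x : Fin n → ℝ) : ∑ j, phi x j = 0 := by
  have h := two_mul_sum_mul_sum_of_antisymm (fun j k => cot_half_sub_antisymm (x j) (x k)) 1
  simpa [← phi_eq_sum_univ] using h

lemma continuousOn_phi : ContinuousOn phi (Xspace n) := by
  refine continuousOn_pi.2 fun j => continuousOn_finsetSum _ fun k hk => fun x hx => ?_
  have hsin {i l : Fin n} (h : l < i) : Real.sin ((x i - x l) / 2) ≠ 0 :=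
    (Real.sin_pos_of_mem_Ioo (half_sub_mem_Ioo hx h)).ne'
  have hne : Real.sin ((x j - x k) / 2) ≠ 0 := by
    rcases lt_or_gt_of_ne (Finset.ne_of_mem_erase hk) with h | h
    · exact hsin h
    · rw [← neg_sub (x k), neg_div, Real.sin_neg]
      exact neg_ne_zero.2 (hsin h)
  exact ((hasDerivAt_cot hne).continuousAt.comp (f := fun x : Fin n → ℝ => (x j - x k) / 2)
    (by fun_prop)).continuousWithinAt

lemma sum_sub_mul_phi_sub_le {x y : Fin n → ℝ} (hx : x ∈ Xspace n) (hy : y ∈ Xspace n) :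
    ∑ j, (x j - y j) * (phi x j - phi y j)
      ≤ -(1 / 2) * (n * ∑ j, (x j - y j) ^ 2 - (∑ j, (x j - y j)) ^ 2) := by
  let c (j k : Fin n) : ℝ := Real.cot ((x j - x k) / 2) - Real.cot ((y j - y k) / 2)
  have hphi (j : Fin n) : phi x j - phi y j = ∑ k, c j k := by
    rw [phi_eq_sum_univ, phi_eq_sum_univ, ← Finset.sum_sub_distrib]
  have hc (j k : Fin n) : c k j = -c j k := by
    simp only [c, cot_half_sub_antisymm (x j), cot_half_sub_antisymm (y j)]
    ring
  have hlt {j k : Fin n} (h : k < j) :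
      (x j - y j - (x k - y k)) * c j k ≤ -(1 / 2) * (x j - y j - (x k - y k)) ^ 2 := by
    have := sub_mul_cot_sub_cot_le (half_sub_mem_Ioo hx h) (half_sub_mem_Ioo hy h)
    simp only [c]
    linarith
  have hpair (j k : Fin n) :
      (x j - y j - (x k - y k)) * c j k ≤ -(1 / 2) * (x j - y j - (x k - y k)) ^ 2 := by
    rcases lt_trichotomy k j with h | rfl | h
    · exact hlt h
    · simp
    · linarith [hc j k ▸ hlt h]
  simpa only [hphi, Fintype.card_fin] using sum_mul_sum_le_of_antisymm hc hpair

end Drift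

section EquallySpaced

variable {n : ℕ}

/-- The configuration of `n` points at distance `2π/n` from one another, with first point `ζ`; these
are the static limits of the curves of zero energy. As for `Fin n`, the index starts at `0`. -/
def equallySpaced (n : ℕ) (ζ : ℝ) (j : Fin n) : ℝ := ζ + (j : ℕ) * (2 * π / n)

lemma equallySpaced_mem_Xspace (ζ : ℝ) : equallySpaced n ζ ∈ Xspace n := by
  have hstep (j : Fin n) : 0 < 2 * π / n := div_pos Real.two_pi_pos (Nat.cast_pos.2 j.pos)
  refine ⟨fun i j hij => ?_, fun i j => ?_⟩
  · have hlt : ((i : ℕ) : ℝ) < (j : ℕ) := Nat.cast_lt.2 hij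
    exact add_lt_add_right (mul_lt_mul_of_pos_right hlt (hstep i)) ζ
  · have hi : (i : ℕ) * (2 * π / n) < 2 * π := by
      calc (i : ℕ) * (2 * π / n) < n * (2 * π / n) :=
            mul_lt_mul_of_pos_right (Nat.cast_lt.2 i.isLt) (hstep i)
        _ = 2 * π := mul_div_cancel₀ _ (Nat.cast_pos.2 i.pos).ne'
    have hj : 0 ≤ (j : ℕ) * (2 * π / n) := mul_nonneg (Nat.cast_nonneg _) (hstep j).le
    simp only [equallySpaced]
    linarith

lemma periodic_apply_fin_sub {α : Type*} {f : ℤ → α} (hf : Function.Periodic f n) (j k : Fin n) :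
    f ((j - k : Fin n) : ℕ) = f ((j : ℕ) - (k : ℕ)) := by
  rw [Fin.coe_int_sub_eq_ite]
  split_ifs
  · rfl
  · exact hf _

lemma sum_sub_eq_zero_of_odd_of_periodic {M : Type*} [AddCommGroup M] [IsAddTorsionFree M]
    {f : ℤ → M} (hodd : Function.Odd f) (hper : Function.Periodic f n) (j : Fin n) :
    ∑ k : Fin n, f ((j : ℕ) - (k : ℕ)) = 0 := by
  have : NeZero n := ⟨j.pos.ne'⟩
  have hodd_fin : Function.Odd fun k : Fin n => f (k : ℕ) := fun k => by
    have h := periodic_apply_fin_sub hper 0 k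
    rw [Fin.val_zero, Nat.cast_zero, zero_sub, zero_sub, hodd] at h
    exact h
  calc ∑ k : Fin n, f ((j : ℕ) - (k : ℕ)) = ∑ k : Fin n, f ((j - k : Fin n) : ℕ) :=
        Finset.sum_congr rfl fun k _ => (periodic_apply_fin_sub hper j k).symm
    _ = ∑ k : Fin n, f (k : ℕ) := (Equiv.subLeft j).sum_comp fun k : Fin n => f (k : ℕ)
    _ = 0 := hodd_fin.sum_eq_zero

lemma phi_equallySpaced (ζ : ℝ) : phi (equallySpaced n ζ) = 0 := by
  funext j
  have hn : (n : ℝ) ≠ 0 := Nat.cast_ne_zero.2 j.pos.ne'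
  let f (m : ℤ) : ℝ := Real.cot (m * (π / n))
  have hodd : Function.Odd f := fun m => by
    simp only [f, Int.cast_neg, neg_mul, cot_odd _]
  have hper : Function.Periodic f n := fun m => by
    simp only [f, Int.cast_add, Int.cast_natCast, add_mul, mul_div_cancel₀ π hn, cot_periodic _]
  rw [phi_eq_sum_univ, Pi.zero_apply, ← sum_sub_eq_zero_of_odd_of_periodic hodd hper j]
  refine Finset.sum_congr rfl fun k _ => congrArg Real.cot ?_
  simp only [equallySpaced]
  push_cast
  ring

lemma exists_sum_equallySpaced_eq (hn : n ≠ 0) (s : ℝ) : ∃ ζ, ∑ j, equallySpaced n ζ j = s := by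
  refine ⟨(s - ∑ j : Fin n, (j : ℕ) * (2 * π / n)) / n, ?_⟩
  simp only [equallySpaced, Finset.sum_add_distrib, Finset.sum_const, Finset.card_univ,
    Fintype.card_fin, nsmul_eq_mul]
  rw [mul_div_cancel₀ _ (Nat.cast_ne_zero.2 hn), sub_add_cancel]

end EquallySpaced

section IntegralCurves

lemma le_mul_exp_of_hasDerivWithinAt_le {f f' : ℝ → ℝ} {K a : ℝ}
    (hf : ∀ t ∈ Ici a, HasDerivWithinAt f (f' t) (Ici a) t)
    (bound : ∀ t ∈ Ici a, f' t ≤ K * f t) {t : ℝ} (ht : t ∈ Ici a) :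
    f t ≤ f a * Real.exp (K * (t - a)) := by
  rw [← gronwallBound_ε0]
  refine le_gronwallBound_of_liminf_deriv_right_le (f' := f') (b := t)
    (fun s hs => ((hf s hs.1).mono Icc_subset_Ici_self).continuousWithinAt)
    (fun s hs r hr => ?_) le_rfl (fun s hs => (bound s hs.1).trans_eq (add_zero _).symm)
    t (right_mem_Icc.2 ht)
  exact ((hf s hs.1).mono (Ici_subset_Ici.2 hs.1)).liminf_right_slope_le hr

/-- The Euclidean length is written out because `ι → ℝ` carries the sup norm. -/
lemma sum_sq_sub_le_of_isIntegralCurveOn {ι : Type*} [Fintype ι] {α β : ℝ → ι → ℝ}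
    {v : ℝ → (ι → ℝ) → ι → ℝ} {K a : ℝ}
    (hα : IsIntegralCurveOn α v (Ici a)) (hβ : IsIntegralCurveOn β v (Ici a))
    (hv : ∀ t ∈ Ici a, ∑ j, (α t j - β t j) * (v t (α t) j - v t (β t) j)
      ≤ K * ∑ j, (α t j - β t j) ^ 2) {t : ℝ} (ht : t ∈ Ici a) :
    ∑ j, (α t j - β t j) ^ 2
      ≤ (∑ j, (α a j - β a j) ^ 2) * Real.exp (2 * K * (t - a)) := by
  have hderiv : ∀ s ∈ Ici a, HasDerivWithinAt (fun s => ∑ j, (α s j - β s j) ^ 2)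
      (2 * ∑ j, (α s j - β s j) * (v s (α s) j - v s (β s) j)) (Ici a) s := by
    intro s hs
    rw [Finset.mul_sum]
    refine HasDerivWithinAt.fun_sum fun j _ => ?_
    have hαj := hasDerivWithinAt_pi.1 (hα s hs) j
    have hβj := hasDerivWithinAt_pi.1 (hβ s hs) j
    refine ((hαj.fun_sub hβj).fun_pow 2).congr_deriv ?_
    push_cast
    ring
  refine le_mul_exp_of_hasDerivWithinAt_le hderiv (fun s hs => ?_) ht
  linarith [hv s hs]

/-- The field `2φ` whose integral curves are the curves of zero energy, as a time-independent
instance of the time-dependent fields that `IsIntegralCurveOn` expects. -/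
def multiradialField (n : ℕ) : ℝ → (Fin n → ℝ) → Fin n → ℝ := fun _ x => (2 : ℝ) • phi x

variable {n : ℕ} {θ η : ℝ → Fin n → ℝ} {a t : ℝ}

lemma sum_eq_of_isIntegralCurveOn (hθ : IsIntegralCurveOn θ (multiradialField n) (Ici a))
    (ht : t ∈ Ici a) : ∑ j, θ t j = ∑ j, θ a j := by
  have hderiv : ∀ s ∈ Ici a, HasDerivWithinAt (fun s => ∑ j, θ s j) 0 (Ici a) s := by
    intro s hs
    have hsum := HasDerivWithinAt.fun_sum (u := Finset.univ)
      fun j _ => hasDerivWithinAt_pi.1 (hθ s hs) j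
    refine hsum.congr_deriv ?_
    simp only [multiradialField, Pi.smul_apply, ← Finset.smul_sum, sum_phi_eq_zero, smul_zero]
  exact constant_of_has_deriv_right_zero (b := t)
    (fun s hs => ((hderiv s hs.1).mono Icc_subset_Ici_self).continuousWithinAt)
    (fun s hs => (hderiv s hs.1).mono (Ici_subset_Ici.2 hs.1)) t (right_mem_Icc.2 ht)

lemma sum_sq_sub_le_of_isIntegralCurveOn_multiradialField
    (hθ : IsIntegralCurveOn θ (multiradialField n) (Ici a))
    (hη : IsIntegralCurveOn η (multiradialField n) (Ici a))
    (hθX : ∀ t ∈ Ici a, θ t ∈ Xspace n) (hηX : ∀ t ∈ Ici a, η t ∈ Xspace n)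
    (hsum : ∑ j, θ a j = ∑ j, η a j) (ht : t ∈ Ici a) :
    ∑ j, (θ t j - η t j) ^ 2
      ≤ (∑ j, (θ a j - η a j) ^ 2) * Real.exp (2 * -n * (t - a)) := by
  refine sum_sq_sub_le_of_isIntegralCurveOn hθ hη (fun s hs => ?_) ht
  have hmean : ∑ j, (θ s j - η s j) = 0 := by
    rw [Finset.sum_sub_distrib, sum_eq_of_isIntegralCurveOn hθ hs,
      sum_eq_of_isIntegralCurveOn hη hs, hsum, sub_self]
  have hmono := sum_sub_mul_phi_sub_le (hθX s hs) (hηX s hs)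
  rw [hmean] at hmono
  simp only [multiradialField, Pi.smul_apply, smul_eq_mul, ← mul_sub, mul_left_comm _ (2 : ℝ),
    ← Finset.mul_sum]
  linarith

lemma isIntegralCurveOn_equallySpaced (ζ : ℝ) (s : Set ℝ) :
    IsIntegralCurveOn (fun _ => equallySpaced n ζ) (multiradialField n) s := fun t _ => by
  simp only [multiradialField, phi_equallySpaced, smul_zero]
  exact hasDerivWithinAt_const t s _

lemma abs_sub_equallySpaced_le_of_isIntegralCurveOn {ζ : ℝ}
    (hθ : IsIntegralCurveOn θ (multiradialField n) (Ici a))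
    (hX : ∀ t ∈ Ici a, θ t ∈ Xspace n)
    (hζ : ∑ j, equallySpaced n ζ j = ∑ j, θ a j) (ht : t ∈ Ici a) (j : Fin n) :
    |θ t j - equallySpaced n ζ j|
      ≤ √(∑ i, (θ a i - equallySpaced n ζ i) ^ 2) * Real.exp (-n * (t - a)) := by
  refine abs_le_of_sq_le_sq ?_ (by positivity)
  calc (θ t j - equallySpaced n ζ j) ^ 2
      ≤ ∑ i, (θ t i - equallySpaced n ζ i) ^ 2 :=
        Finset.single_le_sum (f := fun i => (θ t i - equallySpaced n ζ i) ^ 2)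
          (fun i _ => sq_nonneg _) (Finset.mem_univ j)
    _ ≤ (∑ i, (θ a i - equallySpaced n ζ i) ^ 2) * Real.exp (2 * -n * (t - a)) :=
        sum_sq_sub_le_of_isIntegralCurveOn_multiradialField hθ
          (isIntegralCurveOn_equallySpaced ζ _) hX (fun _ _ => equallySpaced_mem_Xspace ζ)
          hζ.symm ht
    _ = _ := by
        rw [mul_pow, Real.sq_sqrt (Finset.sum_nonneg fun i _ => sq_nonneg _), ← Real.exp_nat_mul,
          Nat.cast_ofNat, mul_assoc 2]

end IntegralCurves

section ZeroEnergy

lemma absolutelyContinuousOnInterval_congr {X : Type*} [PseudoMetricSpace X] {f g : ℝ → X}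
    {a b : ℝ} (hf : AbsolutelyContinuousOnInterval f a b) (hfg : EqOn f g (uIcc a b)) :
    AbsolutelyContinuousOnInterval g a b := by
  refine Tendsto.congr' ?_ hf
  filter_upwards [mem_inf_of_right (mem_principal_self _)] with E hE
  exact Finset.sum_congr rfl fun i hi => by rw [hfg (hE.1 i hi).1, hfg (hE.1 i hi).2]

lemma hasDerivWithinAt_integral_Ici {E : Type*} [NormedAddCommGroup E] [NormedSpace ℝ E]
    [CompleteSpace E] {f : ℝ → E} {a t : ℝ} (hf : ContinuousOn f (Ici a)) (ht : t ∈ Ici a) :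
    HasDerivWithinAt (fun u => ∫ s in a..u, f s) (f t) (Ici a) t := by
  have hIcc : Icc a (t + 1) ∈ 𝓝[Ici a] t := by
    rw [← Ici_inter_Iic]
    exact inter_mem_nhdsWithin _ (Iic_mem_nhds (lt_add_one t))
  have : Fact (t ∈ Icc a (t + 1)) := ⟨ht, (lt_add_one t).le⟩
  have hf' : ContinuousOn f (Icc a (t + 1)) := hf.mono Icc_subset_Ici_self
  refine HasDerivWithinAt.mono_of_mem_nhdsWithin (t := Icc a (t + 1)) ?_ hIcc
  refine intervalIntegral.integral_hasDerivWithinAt_right ?_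
    (hf'.stronglyMeasurableAtFilter_nhdsWithin measurableSet_Icc t) (hf' t this.out)
  exact (hf.mono (by rw [uIcc_of_le ht]; exact Icc_subset_Ici_self)).intervalIntegrable

variable {n : ℕ} {T : ℝ} {θ : ℝ → Fin n → ℝ}

lemma AbsCont.eq_add_integral_deriv (h : AbsCont T θ) {t : ℝ} (ht : t ∈ Icc 0 T) (j : Fin n) :
    θ t j = θ 0 j + ∫ s in (0 : ℝ)..t, deriv (fun r => θ r j) s := by
  obtain ⟨v, hv, hθ⟩ := h
  have hvI : IntervalIntegrable (fun s => v s j) volume 0 t :=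
    (intervalIntegrable_iff_integrableOn_Icc_of_le ht.1).2
      ((hv j).mono_set (Icc_subset_Icc_right ht.2))
  have hconst : AbsolutelyContinuousOnInterval (fun _ => θ 0 j) 0 t :=
    (LipschitzWith.const (θ 0 j)).lipschitzOnWith.absolutelyContinuousOnInterval
  have hac : AbsolutelyContinuousOnInterval (fun r => θ r j) 0 t :=
    absolutelyContinuousOnInterval_congr
      (hconst.fun_add (hvI.absolutelyContinuousOnInterval_intervalIntegral left_mem_uIcc))
      fun r hr => by
        rw [uIcc_of_le ht.1] at hr
        exact (hθ r ⟨hr.1, hr.2.trans ht.2⟩ j).symm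
  rw [hac.integral_deriv_eq_sub, add_sub_cancel]

lemma absCont_of_mEnergy_ne_top (h : mEnergy n T θ ≠ ⊤) : AbsCont T θ := by
  by_contra hac
  exact h (if_neg hac)

lemma ae_deriv_eq_of_mEnergy_eq_zero (hcont : ContinuousOn θ (Ioc 0 T))
    (hX : ∀ t ∈ Ioc 0 T, θ t ∈ Xspace n) (hJ : mEnergy n T θ = 0) :
    ∀ᵐ s, s ∈ Ioc 0 T → ∀ j, deriv (fun t => θ t j) s = 2 * phi (θ s) j := by
  have hac : AbsCont T θ := absCont_of_mEnergy_ne_top (hJ ▸ ENNReal.zero_ne_top)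
  have hphi : ContinuousOn (fun s => phi (θ s)) (Ioc 0 T) := continuousOn_phi.comp hcont hX
  have hmeas : AEMeasurable (fun s => ENNReal.ofReal
      (∑ j, (deriv (fun t => θ t j) s - 2 * phi (θ s) j) ^ 2)) (volume.restrict (Ioc 0 T)) := by
    refine (Finset.aemeasurable_fun_sum _ fun j _ => ?_).ennreal_ofReal
    refine ((measurable_deriv _).aemeasurable.sub ?_).pow_const 2
    exact ((continuousOn_pi.1 hphi j).aemeasurable measurableSet_Ioc).const_mul 2
  rw [mEnergy, if_pos hac, mul_eq_zero, or_iff_right (by simp), lintegral_eq_zero_iff' hmeas,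
    EventuallyEq, ae_restrict_iff' measurableSet_Ioc] at hJ
  filter_upwards [hJ] with s hs hsT j
  have hsum := (Finset.sum_nonneg fun i _ => sq_nonneg _).antisymm'
    (ENNReal.ofReal_eq_zero.1 (hs hsT))
  rw [Finset.sum_eq_zero_iff_of_nonneg fun i _ => sq_nonneg _] at hsum
  exact sub_eq_zero.1 (pow_eq_zero_iff two_ne_zero |>.1 (hsum j (Finset.mem_univ j)))

lemma isIntegralCurveOn_of_mEnergyInf_eq_zero (hcont : ContinuousOn θ (Ici 0))
    (hX : ∀ t ∈ Ici (0 : ℝ), θ t ∈ Xspace n) (hJ : mEnergyInf n θ = 0) :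
    IsIntegralCurveOn θ (multiradialField n) (Ici 0) := by
  have hphi : ContinuousOn (fun s => phi (θ s)) (Ici 0) := continuousOn_phi.comp hcont hX
  have hJT (T : ℝ) : mEnergy n T θ = 0 := ENNReal.iSup_eq_zero.1 hJ T
  have hint (j : Fin n) {t : ℝ} (ht : t ∈ Ici 0) :
      θ t j = θ 0 j + ∫ s in (0 : ℝ)..t, 2 * phi (θ s) j := by
    have hac : AbsCont t θ := absCont_of_mEnergy_ne_top (hJT t ▸ ENNReal.zero_ne_top)
    rw [hac.eq_add_integral_deriv (right_mem_Icc.2 ht) j]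
    congr 1
    refine intervalIntegral.integral_congr_ae ?_
    rw [uIoc_of_le ht]
    filter_upwards [ae_deriv_eq_of_mEnergy_eq_zero (hcont.mono fun s hs => hs.1.le)
      (fun s hs => hX s hs.1.le) (hJT t)] with s hs hst using hs hst j
  refine fun t ht => hasDerivWithinAt_pi.2 fun j => ?_
  have hftc := hasDerivWithinAt_integral_Ici
    (continuousOn_const.mul (continuousOn_pi.1 hphi j) : ContinuousOn (fun s => 2 * phi (θ s) j) _)
    ht
  exact (hftc.const_add (θ 0 j)).congr (fun s hs => hint j hs) (hint j ht)

end ZeroEnergy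

/-- If `n ≥ 2` and `θ : [0,∞) → 𝒳ₙ` is continuous with zero
multiradial Dirichlet energy, then `θ_t` converges, exponentially fast with rate `n`,
to a static equally spaced configuration `(ζ, ζ + 2π/n, …, ζ + (n-1)2π/n)`. -/
theorem zero_energy_converges_to_equally_spaced
    (n : ℕ) (hn : 2 ≤ n) (θ : ℝ → Fin n → ℝ)
    (hcont : ContinuousOn θ (Ici 0))
    (hX : ∀ t ∈ Ici (0 : ℝ), θ t ∈ Xspace n)
    (hJ : mEnergyInf n θ = 0) :
    ∃ ζ C : ℝ, 0 ≤ C ∧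
      ∀ t ∈ Ici (0 : ℝ), ∀ j : Fin n,
        |θ t j - (ζ + (j : ℕ) * (2 * π / n))| ≤ C * Real.exp (-(n : ℝ) * t) := by
  have hflow := isIntegralCurveOn_of_mEnergyInf_eq_zero hcont hX hJ
  obtain ⟨ζ, hζ⟩ := exists_sum_equallySpaced_eq (by omega : n ≠ 0) (∑ j, θ 0 j)
  refine ⟨ζ, √(∑ j, (θ 0 j - equallySpaced n ζ j) ^ 2), Real.sqrt_nonneg _, fun t ht j => ?_⟩
  have hdecay := abs_sub_equallySpaced_le_of_isIntegralCurveOn hflow hX hζ ht j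
  rwa [sub_zero] at hdecay

end
end

section
/- For every initial configuration θ₀ ∈ 𝒳ₙ there exists a unique differentiable function θ : [0,∞) → 𝒳ₙ with θ(0) = θ₀ satisfying the system of differential equations dθ^j_t/dt = 2φ^j(θ_t) for all t ≥ 0 and all j ∈ {1,…,n}. -/
open MeasureTheory Filter Set
open scoped Real Topology ENNReal Classical

noncomputable section

/-!
The product `P(θ) = ∏_{j ≠ k} sin² ((θʲ - θᵏ) / 2)` vanishes exactly at collisions, and `2 φ` is the
gradient of `log P`, so `P` is nondecreasing along the flow. On a superlevel set `{P > c}` with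
`c > 0` the field `2 φ` is bounded and Lipschitz; it therefore extends to a bounded Lipschitz field
on all of `ℝⁿ`, whose global integral curves never leave `{P > c}` and hence solve the original
system. Since points cannot collide, continuity keeps their cyclic order.
-/

open scoped NNReal

section IntegralCurves

variable {E : Type*} [NormedAddCommGroup E] [NormedSpace ℝ E]

theorem isIntegralCurveOn_Icc_eqOn {v : ℝ → E → E} {K : ℝ≥0} (hv : ∀ t, LipschitzWith K (v t))
    {γ η : ℝ → E} {a b : ℝ} (hγ : IsIntegralCurveOn γ v (Icc a b))
    (hη : IsIntegralCurveOn η v (Icc a b)) (ha : γ a = η a) : EqOn γ η (Icc a b) := by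
  have right_deriv {ζ : ℝ → E} (hζ : IsIntegralCurveOn ζ v (Icc a b)) :
      ∀ t ∈ Ico a b, HasDerivWithinAt ζ (v t (ζ t)) (Ici t) t := fun t ht ↦
    (hζ t (Ico_subset_Icc_self ht)).mono_of_mem_nhdsWithin <|
      mem_of_superset (Icc_mem_nhdsGE ht.2) (Icc_subset_Icc_left ht.1)
  exact ODE_solution_unique hv hγ.continuousOn (right_deriv hγ) hη.continuousOn (right_deriv hη) ha

theorem isIntegralCurveOn_Ici_eqOn {v : ℝ → E → E} {K : ℝ≥0} (hv : ∀ t, LipschitzWith K (v t))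
    {γ η : ℝ → E} {a : ℝ} (hγ : IsIntegralCurveOn γ v (Ici a))
    (hη : IsIntegralCurveOn η v (Ici a)) (ha : γ a = η a) : EqOn γ η (Ici a) := fun _ ht ↦
  isIntegralCurveOn_Icc_eqOn hv (hγ.mono Icc_subset_Ici_self) (hη.mono Icc_subset_Ici_self) ha
    (right_mem_Icc.2 ht)

theorem exists_isIntegralCurveOn_Ici_of_forall_Icc {v : ℝ → E → E} {K : ℝ≥0}
    (hv : ∀ t, LipschitzWith K (v t)) {x₀ : E}
    (h : ∀ N : ℕ, ∃ γ : ℝ → E, γ 0 = x₀ ∧ IsIntegralCurveOn γ v (Icc 0 N)) :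
    ∃ γ : ℝ → E, γ 0 = x₀ ∧ IsIntegralCurveOn γ v (Ici 0) := by
  choose γ hγ₀ hγ using h
  have agree {M N : ℕ} (hMN : M ≤ N) : EqOn (γ M) (γ N) (Icc 0 M) :=
    isIntegralCurveOn_Icc_eqOn hv (hγ M)
      ((hγ N).mono (Icc_subset_Icc_right (Nat.cast_le.2 hMN))) ((hγ₀ M).trans (hγ₀ N).symm)
  let glued : ℝ → E := fun t ↦ γ (⌊t⌋₊ + 1) t
  have lt_succ_floor (t : ℝ) : t < (⌊t⌋₊ + 1 : ℕ) := by exact_mod_cast Nat.lt_floor_add_one t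
  have glued_eqOn (N : ℕ) : EqOn glued (γ N) (Ico 0 N) := fun t ht ↦
    agree ((Nat.floor_lt ht.1).2 ht.2) ⟨ht.1, (lt_succ_floor t).le⟩
  refine ⟨glued, by simp [glued, hγ₀], fun t ht ↦ ?_⟩
  have hIco : Ico 0 ((⌊t⌋₊ + 1 : ℕ) : ℝ) ∈ 𝓝[Ici 0] t := by
    rw [← Ici_inter_Iio]
    exact inter_mem self_mem_nhdsWithin
      (mem_nhdsWithin_of_mem_nhds (Iio_mem_nhds (lt_succ_floor t)))
  exact ((hγ _ t ⟨ht, (lt_succ_floor t).le⟩).mono_of_mem_nhdsWithin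
    (mem_of_superset hIco Ico_subset_Icc_self)).congr_of_eventuallyEq
      (mem_of_superset hIco (glued_eqOn _)) rfl

theorem exists_isIntegralCurveOn_Ici_of_bounded [CompleteSpace E] {v : ℝ → E → E} {K M : ℝ≥0}
    (hv : ∀ t, LipschitzWith K (v t)) (hcont : ∀ x, Continuous (v · x)) (hM : ∀ t x, ‖v t x‖ ≤ M)
    (x₀ : E) : ∃ γ : ℝ → E, γ 0 = x₀ ∧ IsIntegralCurveOn γ v (Ici 0) := by
  refine exists_isIntegralCurveOn_Ici_of_forall_Icc hv fun N ↦ ?_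
  have picardLindelof :
      IsPicardLindelof v (⟨0, le_rfl, N.cast_nonneg⟩ : Icc (0 : ℝ) N) x₀ (M * N) 0 M K :=
    { lipschitzOnWith := fun t _ ↦ (hv t).lipschitzOnWith
      continuousOn := fun x _ ↦ (hcont x).continuousOn
      norm_le := fun t _ x _ ↦ hM t x
      mul_max_le := by simp }
  exact picardLindelof.exists_eq_forall_mem_Icc_hasDerivWithinAt₀

theorem lt_of_right_deriv_nonneg_of_lt {f f' : ℝ → ℝ} {a b c : ℝ} (hab : a ≤ b)
    (hf : ContinuousOn f (Icc a b)) (hf' : ∀ t ∈ Ico a b, HasDerivWithinAt f (f' t) (Ici t) t)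
    (hnonneg : ∀ t ∈ Ico a b, c < f t → 0 ≤ f' t) (ha : c < f a) : c < f b := by
  -- Compare with a line of slope `-ε` through `(a, f a)` that is still above `c` at time `b`.
  obtain ⟨ε, hε, hεb⟩ : ∃ ε > 0, (b - a) * ε < f a - c :=
    exists_pos_mul_lt (sub_pos.2 ha) _
  have line_above {t : ℝ} (ht : t ≤ b) : ε * (t - a) < f a - c := by
    rw [mul_comm]
    exact lt_of_le_of_lt (by gcongr) hεb
  have fence : -f b ≤ -f a + ε * (b - a) :=
    image_le_of_deriv_right_lt_deriv_boundary (f := fun t ↦ -f t) (f' := fun t ↦ -f' t)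
      (B := fun t ↦ -f a + ε * (t - a)) (B' := fun _ ↦ ε) hf.neg (fun t ht ↦ (hf' t ht).neg)
      (by simp)
      (fun t ↦ by simpa using (((hasDerivAt_id t).sub_const a).const_mul ε).const_add (-f a))
      (fun t ht heq ↦ by linarith [hnonneg t ht (by linarith [line_above ht.2.le])])
      (right_mem_Icc.2 hab)
  linarith [line_above le_rfl]

theorem lt_of_isIntegralCurveOn_Ici {F : E → E} {V : E → ℝ} {c : ℝ} (hV : Differentiable ℝ V)
    (hVF : ∀ x, c < V x → 0 ≤ fderiv ℝ V x (F x)) {γ : ℝ → E} {a : ℝ}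
    (hγ : IsIntegralCurveOn γ (fun _ ↦ F) (Ici a)) (ha : c < V (γ a)) :
    ∀ t ∈ Ici a, c < V (γ t) := by
  intro t ht
  have hderiv (s : ℝ) (hs : a ≤ s) :
      HasDerivWithinAt (V ∘ γ) (fderiv ℝ V (γ s) (F (γ s))) (Ici a) s :=
    (hV (γ s)).hasFDerivAt.comp_hasDerivWithinAt s (hγ s hs)
  exact lt_of_right_deriv_nonneg_of_lt ht
    (fun s hs ↦ (hderiv s hs.1).continuousWithinAt.mono Icc_subset_Ici_self)
    (fun s hs ↦ (hderiv s hs.1).mono (Ici_subset_Ici.2 hs.1)) (fun s _ ↦ hVF (γ s)) ha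

end IntegralCurves

theorem exists_bounded_lipschitzWith_eqOn {α ι : Type*} [PseudoMetricSpace α] [Fintype ι]
    {f : α → ι → ℝ} {s : Set α} {K M : ℝ≥0} (hf : LipschitzOnWith K f s)
    (hM : ∀ x ∈ s, ‖f x‖ ≤ M) :
    ∃ g : α → ι → ℝ, LipschitzWith K g ∧ (∀ x, ‖g x‖ ≤ M) ∧ EqOn f g s := by
  obtain ⟨g, hg, hfg⟩ := hf.extend_pi
  refine ⟨fun x i ↦ max (-M) (min M (g x i)), ?_, fun x ↦ ?_, fun x hx ↦ funext fun i ↦ ?_⟩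
  · refine LipschitzWith.of_dist_le_mul fun x y ↦ (dist_pi_le_iff (by positivity)).2 fun i ↦ ?_
    have hgi : LipschitzWith K (fun z ↦ g z i) :=
      LipschitzWith.of_dist_le_mul fun x y ↦ (dist_le_pi_dist _ _ i).trans (hg.dist_le_mul x y)
    exact ((hgi.const_min M).const_max (-M)).dist_le_mul x y
  · exact (pi_norm_le_iff_of_nonneg M.2).2 fun i ↦
      abs_le.2 ⟨le_max_left _ _, max_le (neg_le_self M.2) (min_le_left _ _)⟩
  · have hgM : |g x i| ≤ M := by
      rw [← hfg hx]
      exact (norm_le_pi_norm (f x) i).trans (hM x hx)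
    simp only [hfg hx, min_eq_right (abs_le.1 hgM).2, max_eq_right (abs_le.1 hgM).1]

theorem exists_unique_isIntegralCurveOn_Ici_of_superlevel {ι : Type*} [Fintype ι]
    {F : (ι → ℝ) → ι → ℝ} {V : (ι → ℝ) → ℝ} {c : ℝ} {K M : ℝ≥0} (hV : Differentiable ℝ V)
    (hVF : ∀ x, c < V x → 0 ≤ fderiv ℝ V x (F x)) (hF : LipschitzOnWith K F {x | c < V x})
    (hM : ∀ x, c < V x → ‖F x‖ ≤ M) {x₀ : ι → ℝ} (hx₀ : c < V x₀) :
    ∃ γ : ℝ → ι → ℝ,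
      (γ 0 = x₀ ∧ (∀ t ∈ Ici 0, c < V (γ t)) ∧ IsIntegralCurveOn γ (fun _ ↦ F) (Ici 0)) ∧
      ∀ η : ℝ → ι → ℝ, η 0 = x₀ → IsIntegralCurveOn η (fun _ ↦ F) (Ici 0) →
        EqOn η γ (Ici 0) := by
  obtain ⟨G, hG, hGM, hFG⟩ := exists_bounded_lipschitzWith_eqOn hF hM
  obtain ⟨γ, hγ₀, hγ⟩ := exists_isIntegralCurveOn_Ici_of_bounded (v := fun _ ↦ G) (fun _ ↦ hG)
    (fun _ ↦ continuous_const) (fun _ ↦ hGM) x₀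
  have hVγ : ∀ t ∈ Ici 0, c < V (γ t) :=
    lt_of_isIntegralCurveOn_Ici hV (fun x hx ↦ hFG hx ▸ hVF x hx) hγ (hγ₀ ▸ hx₀)
  refine ⟨γ, ⟨hγ₀, hVγ, fun t ht ↦ ?_⟩, fun η hη₀ hη ↦ ?_⟩
  · exact (hγ t ht).congr_deriv (hFG (hVγ t ht)).symm
  · have hVη : ∀ t ∈ Ici 0, c < V (η t) := lt_of_isIntegralCurveOn_Ici hV hVF hη (hη₀ ▸ hx₀)
    have hηG : IsIntegralCurveOn η (fun _ ↦ G) (Ici 0) := fun t ht ↦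
      (hη t ht).congr_deriv (hFG (hVη t ht))
    exact isIntegralCurveOn_Ici_eqOn (fun _ ↦ hG) hηG hγ (hη₀.trans hγ₀.symm)

section Cotangent

theorem cot_neg_eq_neg_cot (x : ℝ) : Real.cot (-x) = -Real.cot x := by
  simp only [Real.cot_eq_cos_div_sin, Real.cos_neg, Real.sin_neg, div_neg]

theorem abs_cot_le {c x : ℝ} (hc : 0 < c) (hx : c ≤ Real.sin x ^ 2) : |Real.cot x| ≤ 1 / c := by
  have hsin : c ≤ |Real.sin x| := by
    rw [← sq_abs] at hx
    exact hx.trans (pow_le_of_le_one (abs_nonneg _) (Real.abs_sin_le_one x) two_ne_zero)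
  rw [Real.cot_eq_cos_div_sin, abs_div]
  exact div_le_div₀ zero_le_one (Real.abs_cos_le_one x) hc hsin

theorem abs_cot_sub_cot_le {c x y : ℝ} (hc : 0 < c) (hx : c ≤ Real.sin x ^ 2)
    (hy : c ≤ Real.sin y ^ 2) : |Real.cot x - Real.cot y| ≤ |x - y| / c := by
  have sin_ne_zero {z : ℝ} (hz : c ≤ Real.sin z ^ 2) : Real.sin z ≠ 0 :=
    sq_pos_iff.1 (hc.trans_le hz)
  have cot_sub : Real.cot x - Real.cot y = Real.sin (y - x) / (Real.sin x * Real.sin y) := by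
    rw [Real.cot_eq_cos_div_sin, Real.cot_eq_cos_div_sin,
      div_sub_div _ _ (sin_ne_zero hx) (sin_ne_zero hy), Real.sin_sub]
    ring
  have le_abs_sin_mul : c ≤ |Real.sin x * Real.sin y| := by
    refine le_of_sq_le_sq ?_ (abs_nonneg _)
    rw [sq_abs, mul_pow, sq c]
    exact mul_le_mul hx hy hc.le (sq_nonneg _)
  rw [cot_sub, abs_div, abs_sub_comm x y]
  exact div_le_div₀ (abs_nonneg _) Real.abs_sin_le_abs hc le_abs_sin_mul

-- The derivative is `sin (y / 2) * cos (y / 2)`; this form also holds at the zeros of the sine,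
-- where `cot = 0` by convention.
theorem hasDerivAt_sin_half_sq (y : ℝ) :
    HasDerivAt (fun y ↦ Real.sin (y / 2) ^ 2) (Real.sin (y / 2) ^ 2 * Real.cot (y / 2)) y := by
  refine (((hasDerivAt_id y).div_const 2).sin.pow 2).congr_deriv ?_
  by_cases h : Real.sin (y / 2) = 0
  · simp [h]
  · rw [Real.cot_eq_cos_div_sin]
    simp only [id]
    field

end Cotangent

section SinSqProd

variable {ι : Type*} [Fintype ι]

/-- The squared Vandermonde-type product `∏_{j ≠ k} sin² ((xʲ - xᵏ) / 2)` over ordered pairs, which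
measures how far the points `exp (i xʲ)` of the circle are from colliding. -/
def sinSqProd (x : ι → ℝ) : ℝ :=
  ∏ p ∈ (Finset.univ : Finset ι).offDiag, Real.sin ((x p.1 - x p.2) / 2) ^ 2

theorem sinSqProd_le_sin_sq (x : ι → ℝ) {j k : ι} (h : j ≠ k) :
    sinSqProd x ≤ Real.sin ((x j - x k) / 2) ^ 2 := by
  have hmem : (j, k) ∈ (Finset.univ : Finset ι).offDiag := by simpa using h
  rw [sinSqProd, ← Finset.mul_prod_erase _ _ hmem]
  exact mul_le_of_le_one_right (sq_nonneg _)
    (Finset.prod_le_one (fun _ _ ↦ sq_nonneg _) fun _ _ ↦ Real.sin_sq_le_one _)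

theorem sin_half_sub_eq_zero_iff {a b : ℝ} :
    Real.sin ((a - b) / 2) = 0 ↔ (a : Real.Angle) = b := by
  rw [Real.sin_eq_zero_iff, Real.Angle.angle_eq_iff_two_pi_dvd_sub]
  exact exists_congr fun k ↦ ⟨fun h ↦ by linarith, fun h ↦ by linarith⟩

theorem sinSqProd_pos_iff {x : ι → ℝ} :
    0 < sinSqProd x ↔ Function.Injective fun j ↦ (x j : Real.Angle) := by
  refine ⟨fun h j k hjk ↦ ?_, fun h ↦ Finset.prod_pos fun p hp ↦ ?_⟩
  · by_contra hne
    have hsin := h.trans_le (sinSqProd_le_sin_sq x hne)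
    exact sq_pos_iff.1 hsin (sin_half_sub_eq_zero_iff.2 hjk)
  · exact sq_pos_iff.2 fun hsin ↦
      (Finset.mem_offDiag.1 hp).2.2 (h (sin_half_sub_eq_zero_iff.1 hsin))

theorem hasFDerivAt_finsetProd_of_mul {E κ : Type*} [NormedAddCommGroup E] [NormedSpace ℝ E]
    {u : Finset κ} {g : κ → E → ℝ} {ℓ : κ → E →L[ℝ] ℝ} {x : E}
    (h : ∀ i ∈ u, HasFDerivAt (g i) (g i x • ℓ i) x) :
    HasFDerivAt (fun y ↦ ∏ i ∈ u, g i y) ((∏ i ∈ u, g i x) • ∑ i ∈ u, ℓ i) x := by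
  refine (HasFDerivAt.finsetProd h).congr_fderiv ?_
  rw [Finset.smul_sum]
  exact Finset.sum_congr rfl fun i hi ↦ by rw [smul_smul, Finset.prod_erase_mul _ _ hi]

theorem hasFDerivAt_sinSqProd (x : ι → ℝ) :
    HasFDerivAt sinSqProd
      (sinSqProd x • ∑ p ∈ (Finset.univ : Finset ι).offDiag, Real.cot ((x p.1 - x p.2) / 2) •
        (ContinuousLinearMap.proj (R := ℝ) (φ := fun _ : ι ↦ ℝ) p.1 -
          ContinuousLinearMap.proj p.2)) x := by
  refine hasFDerivAt_finsetProd_of_mul fun p _ ↦ ?_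
  have hasFDerivAt_sub : HasFDerivAt (𝕜 := ℝ) (fun y : ι → ℝ ↦ y p.1 - y p.2)
      (.proj p.1 - .proj p.2) x :=
    (hasFDerivAt_apply p.1 x).fun_sub (hasFDerivAt_apply p.2 x)
  rw [smul_smul]
  exact (hasDerivAt_sin_half_sq (x p.1 - x p.2)).comp_hasFDerivAt x hasFDerivAt_sub

end SinSqProd

section Phi

variable {n : ℕ}

theorem sum_offDiag_cot_mul_sub (x v : Fin n → ℝ) :
    ∑ p ∈ (Finset.univ : Finset (Fin n)).offDiag,
      Real.cot ((x p.1 - x p.2) / 2) * (v p.1 - v p.2) = 2 * ∑ j, v j * phi x j := by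
  have sum_fst : ∑ p ∈ (Finset.univ : Finset (Fin n)).offDiag,
      Real.cot ((x p.1 - x p.2) / 2) * v p.1 = ∑ j, v j * phi x j := by
    rw [Finset.sum_finset_product' _ Finset.univ (fun j ↦ Finset.univ.erase j)
      (f := fun j k ↦ Real.cot ((x j - x k) / 2) * v j) (by simp [eq_comm])]
    exact Finset.sum_congr rfl fun j _ ↦ by rw [phi, ← Finset.sum_mul, mul_comm]
  have sum_snd : ∑ p ∈ (Finset.univ : Finset (Fin n)).offDiag,
      Real.cot ((x p.1 - x p.2) / 2) * v p.2 = -∑ j, v j * phi x j := by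
    rw [← sum_fst, ← Finset.sum_neg_distrib]
    refine Finset.sum_equiv (Equiv.prodComm _ _) (by simp [eq_comm]) fun p _ ↦ ?_
    rw [Equiv.prodComm_apply, Prod.fst_swap, Prod.snd_swap, ← neg_sub (x p.1), neg_div,
      cot_neg_eq_neg_cot, neg_mul, neg_neg]
  simp only [mul_sub, Finset.sum_sub_distrib, sum_fst, sum_snd]
  ring

theorem fderiv_sinSqProd_apply (x v : Fin n → ℝ) :
    fderiv ℝ sinSqProd x v = sinSqProd x * (2 * ∑ j, v j * phi x j) := by
  rw [(hasFDerivAt_sinSqProd x).fderiv, ← sum_offDiag_cot_mul_sub]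
  simp

theorem fderiv_sinSqProd_two_smul_phi_nonneg {x : Fin n → ℝ} (hx : 0 ≤ sinSqProd x) :
    0 ≤ fderiv ℝ sinSqProd x ((2 : ℝ) • phi x) := by
  rw [fderiv_sinSqProd_apply]
  refine mul_nonneg hx (mul_nonneg zero_le_two (Finset.sum_nonneg fun j _ ↦ ?_))
  rw [Pi.smul_apply, smul_eq_mul, mul_assoc]
  exact mul_nonneg zero_le_two (mul_self_nonneg _)

theorem norm_phi_le {c : ℝ} (hc : 0 < c) {x : Fin n → ℝ} (hx : c ≤ sinSqProd x) :
    ‖phi x‖ ≤ n / c := by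
  refine (pi_norm_le_iff_of_nonneg (by positivity)).2 fun j ↦ ?_
  calc ‖phi x j‖ ≤ ∑ _k ∈ Finset.univ.erase j, 1 / c :=
        norm_sum_le_of_le _ fun k hk ↦
          abs_cot_le hc (hx.trans (sinSqProd_le_sin_sq x (Finset.ne_of_mem_erase hk).symm))
    _ ≤ ∑ _k : Fin n, 1 / c :=
        Finset.sum_le_sum_of_subset_of_nonneg (Finset.subset_univ _) fun _ _ _ ↦ by positivity
    _ = n / c := by simp [div_eq_mul_inv]

theorem abs_half_sub_sub_half_sub_le_dist {ι : Type*} [Fintype ι] (x y : ι → ℝ) (j k : ι) :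
    |(x j - x k) / 2 - (y j - y k) / 2| ≤ dist x y := by
  have hj := dist_le_pi_dist x y j
  have hk := dist_le_pi_dist x y k
  rw [Real.dist_eq, abs_le] at hj hk
  exact abs_le.2 ⟨by linarith, by linarith⟩

theorem dist_phi_le {c : ℝ} (hc : 0 < c) {x y : Fin n → ℝ} (hx : c ≤ sinSqProd x)
    (hy : c ≤ sinSqProd y) : dist (phi x) (phi y) ≤ n / c * dist x y := by
  refine (dist_pi_le_iff (by positivity)).2 fun j ↦ ?_
  rw [dist_eq_norm, phi, phi, ← Finset.sum_sub_distrib]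
  calc ‖∑ k ∈ Finset.univ.erase j,
          (Real.cot ((x j - x k) / 2) - Real.cot ((y j - y k) / 2))‖
      ≤ ∑ _k ∈ Finset.univ.erase j, dist x y / c :=
        norm_sum_le_of_le _ fun k hk ↦
          have hjk := (Finset.ne_of_mem_erase hk).symm
          (abs_cot_sub_cot_le hc (hx.trans (sinSqProd_le_sin_sq x hjk))
            (hy.trans (sinSqProd_le_sin_sq y hjk))).trans
            (div_le_div_of_nonneg_right (abs_half_sub_sub_half_sub_le_dist x y j k) hc.le)
    _ ≤ ∑ _k : Fin n, dist x y / c :=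
        Finset.sum_le_sum_of_subset_of_nonneg (Finset.subset_univ _) fun _ _ _ ↦ by positivity
    _ = n / c * dist x y := by simp [mul_comm_div]

theorem lipschitzOnWith_phi {c : ℝ≥0} (hc : 0 < c) :
    LipschitzOnWith (n / c) (phi (n := n)) {x | c < sinSqProd x} :=
  LipschitzOnWith.of_dist_le_mul fun _ hx _ hy ↦ dist_phi_le hc (le_of_lt hx) (le_of_lt hy)

end Phi

section ConfigurationSpace

variable {n : ℕ}

theorem mem_Xspace_iff {x : Fin n → ℝ} :
    x ∈ Xspace n ↔ ∀ j k, j < k → x k - x j ∈ Ioo 0 (2 * π) := by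
  refine ⟨fun hx j k hjk ↦ ⟨sub_pos.2 (hx.1 hjk), sub_lt_iff_lt_add'.2 (hx.2 k j)⟩,
    fun hx ↦ ⟨fun j k hjk ↦ sub_pos.1 (hx j k hjk).1, fun j k ↦ ?_⟩⟩
  rcases lt_trichotomy j k with h | rfl | h
  · linarith [(hx j k h).1, Real.pi_pos]
  · linarith [Real.pi_pos]
  · exact sub_lt_iff_lt_add'.1 (hx k j h).2

theorem injective_coe_angle_of_mem_Xspace {x : Fin n → ℝ} (hx : x ∈ Xspace n) :
    Function.Injective fun j ↦ (x j : Real.Angle) := by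
  have coe_ne {j k : Fin n} (hjk : j < k) : (x j : Real.Angle) ≠ x k := fun heq ↦ by
    obtain ⟨hpos, hlt⟩ := mem_Xspace_iff.1 hx j k hjk
    have hsin : 0 < Real.sin ((x k - x j) / 2) :=
      Real.sin_pos_of_pos_of_lt_pi (by linarith) (by linarith)
    exact hsin.ne' (sin_half_sub_eq_zero_iff.2 heq.symm)
  exact fun j k heq ↦ by_contra fun hne ↦
    (lt_or_gt_of_ne hne).elim (fun h ↦ coe_ne h heq) fun h ↦ coe_ne h heq.symm

theorem mem_Ioo_of_isPreconnected {X : Type*} [TopologicalSpace X] {s : Set X}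
    (hs : IsPreconnected s) {f : X → ℝ} (hf : ContinuousOn f s) {l u : ℝ}
    (hl : ∀ t ∈ s, f t ≠ l) (hu : ∀ t ∈ s, f t ≠ u) {a : X} (ha : a ∈ s) (hfa : f a ∈ Ioo l u) :
    ∀ t ∈ s, f t ∈ Ioo l u := by
  intro t ht
  constructor
  · by_contra! hle
    obtain ⟨r, hr, hrl⟩ := hs.intermediate_value ht ha hf ⟨hle, hfa.1.le⟩
    exact hl r hr hrl
  · by_contra! hle
    obtain ⟨r, hr, hru⟩ := hs.intermediate_value ha ht hf ⟨hfa.2.le, hle⟩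
    exact hu r hr hru

theorem mem_Xspace_of_isPreconnected {X : Type*} [TopologicalSpace X] {s : Set X}
    (hs : IsPreconnected s) {θ : X → Fin n → ℝ} (hθ : ContinuousOn θ s)
    (hinj : ∀ t ∈ s, Function.Injective fun j ↦ (θ t j : Real.Angle)) {a : X} (ha : a ∈ s)
    (hθa : θ a ∈ Xspace n) : ∀ t ∈ s, θ t ∈ Xspace n := by
  intro t ht
  refine mem_Xspace_iff.2 fun j k hjk ↦ ?_
  have coe_ne (r : X) (hr : r ∈ s) : (θ r k : Real.Angle) ≠ θ r j := (hinj r hr).ne hjk.ne'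
  refine mem_Ioo_of_isPreconnected hs (f := fun r ↦ θ r k - θ r j)
    ((continuousOn_pi.1 hθ k).sub (continuousOn_pi.1 hθ j)) (fun r hr h ↦ coe_ne r hr ?_)
    (fun r hr h ↦ coe_ne r hr ?_) ha (mem_Xspace_iff.1 hθa j k hjk) t ht
  · rw [sub_eq_zero.1 h]
  · exact Real.Angle.angle_eq_iff_two_pi_dvd_sub.2 ⟨1, by simpa using h⟩

end ConfigurationSpace

theorem zero_energy_flow_exists_unique_general {n : ℕ} {θ₀ : Fin n → ℝ}
    (h₀ : Function.Injective fun j ↦ (θ₀ j : Real.Angle)) :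
    ∃ θ : ℝ → Fin n → ℝ,
      (θ 0 = θ₀ ∧ (∀ t ∈ Ici (0 : ℝ), Function.Injective fun j ↦ (θ t j : Real.Angle)) ∧
        IsIntegralCurveOn θ (fun _ x ↦ (2 : ℝ) • phi x) (Ici 0)) ∧
      ∀ θ' : ℝ → Fin n → ℝ, θ' 0 = θ₀ →
        IsIntegralCurveOn θ' (fun _ x ↦ (2 : ℝ) • phi x) (Ici 0) → EqOn θ' θ (Ici 0) := by
  obtain ⟨c, hc, hcθ₀⟩ := exists_between (sinSqProd_pos_iff.2 h₀)
  lift c to ℝ≥0 using hc.le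
  have hLip : LipschitzOnWith (‖(2 : ℝ)‖₊ * (n / c)) (fun x : Fin n → ℝ ↦ (2 : ℝ) • phi x)
      {x | c < sinSqProd x} :=
    (lipschitzWith_smul (2 : ℝ)).comp_lipschitzOnWith (lipschitzOnWith_phi (mod_cast hc))
  have hbound (x : Fin n → ℝ) (hx : c < sinSqProd x) :
      ‖(2 : ℝ) • phi x‖ ≤ (‖(2 : ℝ)‖₊ * (n / c) : ℝ≥0) := by
    rw [norm_smul]
    exact mul_le_mul_of_nonneg_left (norm_phi_le hc hx.le) (norm_nonneg _)
  obtain ⟨θ, ⟨hθ₀, hcθ, hθ⟩, hunique⟩ := exists_unique_isIntegralCurveOn_Ici_of_superlevel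
    (fun x ↦ (hasFDerivAt_sinSqProd x).differentiableAt)
    (fun x hx ↦ fderiv_sinSqProd_two_smul_phi_nonneg (hc.trans hx).le) hLip hbound hcθ₀
  exact ⟨θ, ⟨hθ₀, fun t ht ↦ sinSqProd_pos_iff.1 (hc.trans (hcθ t ht)), hθ⟩, hunique⟩

/-- For each initial configuration `θ₀ ∈ 𝒳ₙ`, the system
`dθ^j_t/dt = 2 φ^j(θ_t)` has a unique differentiable solution `θ : [0,∞) → 𝒳ₙ`
with `θ(0) = θ₀`. -/
theorem zero_energy_flow_exists_unique
    (n : ℕ) (hn : 1 ≤ n) (θ₀ : Fin n → ℝ) (h₀ : θ₀ ∈ Xspace n) :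
    ∃ θ : ℝ → Fin n → ℝ,
      (θ 0 = θ₀ ∧ (∀ t ∈ Ici (0 : ℝ), θ t ∈ Xspace n) ∧
        ∀ t ∈ Ici (0 : ℝ), ∀ j : Fin n,
          HasDerivWithinAt (fun s => θ s j) (2 * phi (θ t) j) (Ici 0) t) ∧
      ∀ θ' : ℝ → Fin n → ℝ,
        (θ' 0 = θ₀ ∧ (∀ t ∈ Ici (0 : ℝ), θ' t ∈ Xspace n) ∧
          ∀ t ∈ Ici (0 : ℝ), ∀ j : Fin n,
            HasDerivWithinAt (fun s => θ' s j) (2 * phi (θ' t) j) (Ici 0) t) →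
        ∀ t ∈ Ici (0 : ℝ), θ' t = θ t := by
  obtain ⟨θ, ⟨hθ₀, hinj, hθ⟩, hunique⟩ :=
    zero_energy_flow_exists_unique_general (injective_coe_angle_of_mem_Xspace h₀)
  exact ⟨θ, ⟨hθ₀, mem_Xspace_of_isPreconnected isPreconnected_Ici hθ.continuousOn hinj
      self_mem_Ici (hθ₀ ▸ h₀), fun t ht ↦ hasDerivWithinAt_pi.1 (hθ t ht)⟩,
    fun θ' ⟨hθ'₀, _, hθ'⟩ ↦ hunique θ' hθ'₀ fun t ht ↦ hasDerivWithinAt_pi.2 (hθ' t ht)⟩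

end
end

section
/- Fix a > 0 and let θ : [0,∞) → 𝒳ₙ be continuous with J^a(θ) := lim_{T→∞} J^a_T(θ) < ∞. Then the Dirichlet energy E(θ) := lim_{T→∞} E_T(θ) is finite; more precisely E(θ) ≤ J^a(θ) + G_a(θ_0), where G_a(θ) := −a·log ∏_{1≤j<k≤n} |sin((θ^k − θ^j)/2)|. -/
open MeasureTheory Filter Set
open scoped Real Topology ENNReal Classical

noncomputable section

/-- Truncated multiradial Dirichlet energy with parameter `a`, `J^a_T(θ)`. -/
def mEnergyA (n : ℕ) (a T : ℝ) (θ : ℝ → Fin n → ℝ) : ℝ≥0∞ :=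
  if AbsCont T θ then
    ENNReal.ofReal (1 / 2) *
      ∫⁻ s in Ioc (0 : ℝ) T,
        ENNReal.ofReal (∑ j, (deriv (fun t => θ t j) s - 2 * phiA a (θ s) j) ^ 2)
  else ⊤

/-- `J^a(θ) = lim_{T→∞} J^a_T(θ)` (supremum of the nondecreasing family). -/
def mEnergyAInf (n : ℕ) (a : ℝ) (θ : ℝ → Fin n → ℝ) : ℝ≥0∞ := ⨆ T : ℝ, mEnergyA n a T θ

/-- Truncated Dirichlet energy `E_T(θ)`. -/
def dEnergy (n : ℕ) (T : ℝ) (θ : ℝ → Fin n → ℝ) : ℝ≥0∞ :=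
  if AbsCont T θ then
    ENNReal.ofReal (1 / 2) *
      ∫⁻ s in Ioc (0 : ℝ) T, ENNReal.ofReal (∑ j, deriv (fun t => θ t j) s ^ 2)
  else ⊤

/-- `E(θ) = lim_{T→∞} E_T(θ)` (supremum of the nondecreasing family). -/
def dEnergyInf (n : ℕ) (θ : ℝ → Fin n → ℝ) : ℝ≥0∞ := ⨆ T : ℝ, dEnergy n T θ

/-- `F(θ) := ∏_{j<k} |sin((θ^k - θ^j)/2)|`. -/
def Fprod {n : ℕ} (x : Fin n → ℝ) : ℝ :=
  ∏ j : Fin n, ∏ k ∈ Finset.univ.filter (fun k => j < k), |Real.sin ((x k - x j) / 2)|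

/-- `G_a(θ) := -a log F(θ)`. -/
def Ga {n : ℕ} (a : ℝ) (x : Fin n → ℝ) : ℝ := -(a * Real.log (Fprod x))

/-!
The drift `2 φ_a` is `-∇ G_a`, so expanding the square along a curve gives
`½ |θ'|² = ½ |θ' - 2 φ_a|² - ½ |2 φ_a|² - (d/dt) G_a(θ)` almost everywhere. Absolute continuity of
`t ↦ G_a(θ_t)` allows one to integrate the last term, which contributes at most `G_a(θ_0)`
because `G_a ≥ 0`.
-/

section AbsolutelyContinuous

variable {X Y : Type*} [PseudoMetricSpace X] [PseudoMetricSpace Y] {a b : ℝ}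

theorem absolutelyContinuousOnInterval_of_eqOn {f g : ℝ → X}
    (hf : AbsolutelyContinuousOnInterval f a b) (hfg : EqOn f g (uIcc a b)) :
    AbsolutelyContinuousOnInterval g a b := by
  refine Tendsto.congr' (eventually_inf_principal.2 <| Eventually.of_forall fun E hE => ?_) hf
  exact Finset.sum_congr rfl fun i hi => by rw [hfg (hE.1 i hi).1, hfg (hE.1 i hi).2]

theorem absolutelyContinuousOnInterval_pi {ι : Type*} [Fintype ι] {Z : ι → Type*}
    [∀ i, PseudoMetricSpace (Z i)] {f : ℝ → ∀ i, Z i}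
    (hf : ∀ i, AbsolutelyContinuousOnInterval (fun x => f x i) a b) :
    AbsolutelyContinuousOnInterval f a b := by
  refine squeeze_zero (fun E => Finset.sum_nonneg fun _ _ => dist_nonneg) (fun E => ?_)
    (by simpa only [Finset.sum_const_zero] using tendsto_finsetSum Finset.univ fun i _ => hf i)
  rw [Finset.sum_comm]
  gcongr with m
  refine (dist_pi_le_iff (Finset.sum_nonneg fun _ _ => dist_nonneg)).2 fun i => ?_
  exact Finset.single_le_sum (f := fun i => dist (f (E.2 m).1 i) (f (E.2 m).2 i))
    (fun _ _ => dist_nonneg) (Finset.mem_univ i)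

theorem absolutelyContinuousOnInterval_comp_of_lipschitzOnWith {f : ℝ → X} {g : X → Y} {K : NNReal}
    (hg : LipschitzOnWith K g (f '' uIcc a b)) (hf : AbsolutelyContinuousOnInterval f a b) :
    AbsolutelyContinuousOnInterval (fun x => g (f x)) a b := by
  refine squeeze_zero' (Eventually.of_forall fun E => Finset.sum_nonneg fun _ _ => dist_nonneg)
    (eventually_inf_principal.2 <| Eventually.of_forall fun E hE => ?_)
    (by simpa only [mul_zero] using Tendsto.const_mul (K : ℝ) hf)
  rw [Finset.mul_sum]
  exact Finset.sum_le_sum fun i hi => hg.dist_le_mul _ (mem_image_of_mem f (hE.1 i hi).1) _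
    (mem_image_of_mem f (hE.1 i hi).2)

theorem absolutelyContinuousOnInterval_comp_of_contDiffAt {E F : Type*}
    [NormedAddCommGroup E] [NormedSpace ℝ E] [NormedAddCommGroup F] [NormedSpace ℝ F]
    {f : ℝ → E} {g : E → F} (hg : ∀ x ∈ uIcc a b, ContDiffAt ℝ 1 g (f x))
    (hf : AbsolutelyContinuousOnInterval f a b) :
    AbsolutelyContinuousOnInterval (fun x => g (f x)) a b := by
  have hlip : LocallyLipschitzOn (f '' uIcc a b) g := by
    rintro _ ⟨x, hx, rfl⟩
    obtain ⟨K, s, hs, hK⟩ := (hg x hx).exists_lipschitzOnWith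
    exact ⟨K, s, mem_nhdsWithin_of_mem_nhds hs, hK⟩
  obtain ⟨K, hK⟩ := hlip.exists_lipschitzOnWith_of_compact
    (isCompact_uIcc.image_of_continuousOn hf.continuousOn)
  exact absolutelyContinuousOnInterval_comp_of_lipschitzOnWith hK hf

end AbsolutelyContinuous

-- Comparing positive and negative parts of `d` avoids any measurability or integrability of `q`.
theorem lintegral_ofReal_le_add_integral {α : Type*} [MeasurableSpace α] {μ : Measure α}
    {e q d : α → ℝ} (hd : Integrable d μ) (he : 0 ≤ᵐ[μ] e) (hle : ∀ᵐ x ∂μ, e x ≤ q x + d x) :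
    ∫⁻ x, ENNReal.ofReal (e x) ∂μ ≤
      ∫⁻ x, ENNReal.ofReal (q x) ∂μ + ENNReal.ofReal (∫ x, d x ∂μ) := by
  set P := ∫⁻ x, ENNReal.ofReal (d x) ∂μ
  set N := ∫⁻ x, ENNReal.ofReal (-d x) ∂μ
  have hNtop : N ≠ ⊤ := hd.neg.lintegral_lt_top.ne
  have hPtop : P ≠ ⊤ := hd.lintegral_lt_top.ne
  have hPN : P ≤ ENNReal.ofReal (∫ x, d x ∂μ) + N := by
    rw [integral_eq_lintegral_pos_part_sub_lintegral_neg_part hd,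
      ENNReal.ofReal_sub _ ENNReal.toReal_nonneg, ENNReal.ofReal_toReal hPtop,
      ENNReal.ofReal_toReal hNtop]
    exact le_tsub_add
  have hpt : ∀ᵐ x ∂μ, ENNReal.ofReal (e x) + ENNReal.ofReal (-d x) ≤
      ENNReal.ofReal (q x) + ENNReal.ofReal (d x) := by
    filter_upwards [he, hle] with x hex hx
    rcases le_total 0 (d x) with h | h
    · rw [ENNReal.ofReal_of_nonpos (neg_nonpos.2 h), add_zero]
      exact (ENNReal.ofReal_le_ofReal hx).trans ENNReal.ofReal_add_le
    · rw [ENNReal.ofReal_of_nonpos h, add_zero, ← ENNReal.ofReal_add hex (neg_nonneg.2 h)]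
      exact ENNReal.ofReal_le_ofReal (by linarith)
  refine (ENNReal.add_le_add_iff_right hNtop).1 ?_
  calc ∫⁻ x, ENNReal.ofReal (e x) ∂μ + N
      = ∫⁻ x, (ENNReal.ofReal (e x) + ENNReal.ofReal (-d x)) ∂μ :=
        (lintegral_add_right' _ hd.aemeasurable.neg.ennreal_ofReal).symm
    _ ≤ ∫⁻ x, (ENNReal.ofReal (q x) + ENNReal.ofReal (d x)) ∂μ := lintegral_mono_ae hpt
    _ = ∫⁻ x, ENNReal.ofReal (q x) ∂μ + P :=
        lintegral_add_right' _ hd.aemeasurable.ennreal_ofReal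
    _ ≤ ∫⁻ x, ENNReal.ofReal (q x) ∂μ + ENNReal.ofReal (∫ x, d x ∂μ) + N := by
        rw [add_assoc]
        gcongr

theorem lintegral_sq_deriv_le_of_gradient {ι : Type*} [Fintype ι] {s t : ℝ} (hst : s ≤ t)
    {γ : ℝ → ι → ℝ} (hγ : ∀ j, AbsolutelyContinuousOnInterval (fun r => γ r j) s t)
    {U : (ι → ℝ) → ℝ} {b : (ι → ℝ) → ι → ℝ} (hU : ∀ r ∈ Icc s t, ContDiffAt ℝ 1 U (γ r))
    (hb : ∀ r ∈ Icc s t, HasFDerivAt U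
      (-∑ j, b (γ r) j • (.proj j : (ι → ℝ) →L[ℝ] ℝ)) (γ r)) :
    ENNReal.ofReal (1 / 2) *
        ∫⁻ r in Ioc s t, ENNReal.ofReal (∑ j, deriv (fun r => γ r j) r ^ 2) ≤
      (ENNReal.ofReal (1 / 2) *
          ∫⁻ r in Ioc s t, ENNReal.ofReal (∑ j, (deriv (fun r => γ r j) r - b (γ r) j) ^ 2)) +
        ENNReal.ofReal (U (γ s) - U (γ t)) := by
  rw [← uIcc_of_le hst] at hU hb
  have hUγ : AbsolutelyContinuousOnInterval (fun r => U (γ r)) s t :=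
    absolutelyContinuousOnInterval_comp_of_contDiffAt hU (absolutelyContinuousOnInterval_pi hγ)
  have hint : IntegrableOn (fun r => -deriv (fun r => U (γ r)) r) (Ioc s t) :=
    ((intervalIntegrable_iff_integrableOn_Ioc_of_le hst).1 hUγ.intervalIntegrable_deriv).neg
  have hpt : ∀ᵐ r ∂volume.restrict (Ioc s t),
      1 / 2 * ∑ j, deriv (fun r => γ r j) r ^ 2 ≤
        1 / 2 * ∑ j, (deriv (fun r => γ r j) r - b (γ r) j) ^ 2 +
          -deriv (fun r => U (γ r)) r := by
    rw [ae_restrict_iff' measurableSet_Ioc]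
    filter_upwards [ae_all_iff.2 fun j => (hγ j).ae_differentiableAt] with r hdiff hr
    have hmem : r ∈ uIcc s t := uIoc_subset_uIcc (Ioc_subset_uIoc hr)
    have hchain : deriv (fun r => U (γ r)) r = -∑ j, b (γ r) j * deriv (fun r => γ r j) r := by
      simpa only [Function.comp_def, neg_apply, sum_apply, smul_apply,
        ContinuousLinearMap.proj_apply, smul_eq_mul] using
        ((hb r hmem).comp_hasDerivAt r (hasDerivAt_pi.2 fun j => (hdiff j hmem).hasDerivAt)).deriv
    rw [hchain, neg_neg]
    simp only [Finset.mul_sum, ← Finset.sum_add_distrib]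
    refine Finset.sum_le_sum fun j _ => ?_
    nlinarith [sq_nonneg (b (γ r) j)]
  have hFTC : ∫ r in Ioc s t, -deriv (fun r => U (γ r)) r = U (γ s) - U (γ t) := by
    rw [integral_neg, ← intervalIntegral.integral_of_le hst, hUγ.integral_deriv_eq_sub, neg_sub]
  simp only [← lintegral_const_mul' _ _ ENNReal.ofReal_ne_top,
    ← ENNReal.ofReal_mul one_half_pos.le, ← hFTC]
  exact lintegral_ofReal_le_add_integral hint (ae_of_all _ fun r => by positivity) hpt

theorem cot_neg (u : ℝ) : Real.cot (-u) = -Real.cot u := by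
  simp only [Real.cot_eq_cos_div_sin, Real.cos_neg, Real.sin_neg, div_neg]

theorem hasDerivAt_log_sin_half {u : ℝ} (hu : Real.sin (u / 2) ≠ 0) :
    HasDerivAt (fun u => Real.log (Real.sin (u / 2))) (1 / 2 * Real.cot (u / 2)) u := by
  refine (((hasDerivAt_id u).div_const 2).sin.log hu).congr_deriv ?_
  rw [Real.cot_eq_cos_div_sin, id]
  ring

section Configurations

variable {n : ℕ} {x : Fin n → ℝ}

theorem Fprod_ne_zero_iff :
    Fprod x ≠ 0 ↔ ∀ j k, j < k → Real.sin ((x k - x j) / 2) ≠ 0 := by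
  simp [Fprod, Finset.prod_ne_zero_iff]

theorem Fprod_ne_zero_of_mem_Xspace (hx : x ∈ Xspace n) : Fprod x ≠ 0 :=
  Fprod_ne_zero_iff.2 fun j k hjk => (Real.sin_pos_of_pos_of_lt_pi
    (by linarith [hx.1 hjk]) (by linarith [hx.2 k j])).ne'

theorem Fprod_nonneg (x : Fin n → ℝ) : 0 ≤ Fprod x :=
  Finset.prod_nonneg fun _ _ => Finset.prod_nonneg fun _ _ => abs_nonneg _

theorem Fprod_le_one (x : Fin n → ℝ) : Fprod x ≤ 1 :=
  Finset.prod_le_one (fun _ _ => Finset.prod_nonneg fun _ _ => abs_nonneg _) fun _ _ =>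
    Finset.prod_le_one (fun _ _ => abs_nonneg _) fun _ _ => Real.abs_sin_le_one _

theorem Ga_nonneg {a : ℝ} (ha : 0 ≤ a) (x : Fin n → ℝ) : 0 ≤ Ga a x :=
  neg_nonneg.2 <|
    mul_nonpos_of_nonneg_of_nonpos ha (Real.log_nonpos (Fprod_nonneg x) (Fprod_le_one x))

theorem contDiffAt_Fprod (hx : Fprod x ≠ 0) {m : ℕ∞} : ContDiffAt ℝ m Fprod x := by
  unfold Fprod
  refine contDiffAt_prod fun j _ => contDiffAt_prod fun k hk => ContDiffAt.abs (by fun_prop) ?_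
  exact Fprod_ne_zero_iff.1 hx j k (Finset.mem_filter.1 hk).2

theorem contDiffAt_Ga (a : ℝ) (hx : Fprod x ≠ 0) {m : ℕ∞} : ContDiffAt ℝ m (Ga a) x :=
  (contDiffAt_const.mul ((contDiffAt_Fprod hx).log hx)).neg

theorem log_Fprod (hx : Fprod x ≠ 0) :
    Real.log (Fprod x) =
      ∑ j, ∑ k ∈ Finset.Ioi j, Real.log (Real.sin ((x k - x j) / 2)) := by
  have hne : ∀ j, ∀ k ∈ Finset.Ioi j, |Real.sin ((x k - x j) / 2)| ≠ 0 := fun j k hk =>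
    abs_ne_zero.2 (Fprod_ne_zero_iff.1 hx j k (Finset.mem_Ioi.1 hk))
  simp only [Fprod, Finset.filter_lt_eq_Ioi]
  rw [Real.log_prod fun j _ => Finset.prod_ne_zero_iff.2 (hne j)]
  simp only [Real.log_prod (hne _), Real.log_abs]

theorem sum_phi_smul {M : Type*} [AddCommGroup M] [Module ℝ M] (x : Fin n → ℝ) (e : Fin n → M) :
    ∑ j, phi x j • e j =
      ∑ j, ∑ k ∈ Finset.Ioi j, Real.cot ((x k - x j) / 2) • (e k - e j) := by
  have hcot : ∀ j k, Real.cot ((x j - x k) / 2) = -Real.cot ((x k - x j) / 2) := fun j k => by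
    rw [← neg_sub (x k), neg_div, cot_neg]
  simp only [phi, Finset.sum_smul, ← Finset.compl_singleton]
  rw [← Finset.sum_sum_Ioi_add_eq_sum_sum_off_diag
    fun k j => Real.cot ((x j - x k) / 2) • e j]
  refine Finset.sum_congr rfl fun j _ => Finset.sum_congr rfl fun k _ => ?_
  rw [hcot j k, neg_smul, smul_sub]
  abel

theorem hasFDerivAt_Ga (a : ℝ) (hx : Fprod x ≠ 0) :
    HasFDerivAt (Ga a)
      (-∑ j, (2 * phiA a x j) • (.proj j : (Fin n → ℝ) →L[ℝ] ℝ)) x := by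
  have hlog : (fun y => Real.log (Fprod y)) =ᶠ[𝓝 x]
      fun y => ∑ j, ∑ k ∈ Finset.Ioi j, Real.log (Real.sin ((y k - y j) / 2)) := by
    filter_upwards [(contDiffAt_Fprod (m := 0) hx).continuousAt.eventually_ne hx] with y hy
    exact log_Fprod hy
  have hpair : ∀ j, ∀ k ∈ Finset.Ioi j,
      HasFDerivAt (fun y : Fin n → ℝ => Real.log (Real.sin ((y k - y j) / 2)))
        ((1 / 2 * Real.cot ((x k - x j) / 2)) • (.proj k - .proj j : (Fin n → ℝ) →L[ℝ] ℝ)) x :=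
    fun j k hk => by
    have hsub : HasFDerivAt (fun y : Fin n → ℝ => y k - y j)
        (.proj k - .proj j : (Fin n → ℝ) →L[ℝ] ℝ) x :=
      (hasFDerivAt_apply k x).fun_sub (hasFDerivAt_apply j x)
    have hlogsin := hasDerivAt_log_sin_half (Fprod_ne_zero_iff.1 hx j k (Finset.mem_Ioi.1 hk))
    exact hlogsin.comp_hasFDerivAt (f := fun y : Fin n → ℝ => y k - y j) x hsub
  have hsum := HasFDerivAt.fun_sum fun j (_ : j ∈ Finset.univ) => HasFDerivAt.fun_sum (hpair j)
  refine ((hsum.congr_of_eventuallyEq hlog).const_mul a).neg.congr_fderiv ?_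
  simp only [mul_smul, ← Finset.smul_sum, ← sum_phi_smul]
  simp only [Finset.smul_sum, smul_smul, phiA]
  congr! 3
  ring

end Configurations

theorem AbsCont.absolutelyContinuousOnInterval {n : ℕ} {T : ℝ} {θ : ℝ → Fin n → ℝ}
    (h : AbsCont T θ) (hT : 0 ≤ T) (j : Fin n) :
    AbsolutelyContinuousOnInterval (fun t => θ t j) 0 T := by
  obtain ⟨v, hv, hθ⟩ := h
  have hint : IntervalIntegrable (fun s => v s j) volume 0 T :=
    (intervalIntegrable_iff_integrableOn_Icc_of_le hT).2 (hv j)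
  have hconst : AbsolutelyContinuousOnInterval (fun _ => θ 0 j) 0 T :=
    contDiffOn_const.absolutelyContinuousOnInterval
  refine absolutelyContinuousOnInterval_of_eqOn
    (hconst.add (hint.absolutelyContinuousOnInterval_intervalIntegral left_mem_uIcc))
    fun t ht => (hθ t ?_ j).symm
  rwa [uIcc_of_le hT] at ht

theorem dEnergy_le_mEnergyA_add_Ga {n : ℕ} {a : ℝ} (ha : 0 ≤ a) {θ : ℝ → Fin n → ℝ} {T : ℝ}
    (hθ : ∀ t ∈ Icc 0 T, Fprod (θ t) ≠ 0) :
    dEnergy n T θ ≤ mEnergyA n a T θ + ENNReal.ofReal (Ga a (θ 0)) := by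
  by_cases hac : AbsCont T θ
  case neg => simp [mEnergyA, hac]
  rcases lt_or_ge T 0 with hT | hT
  · simp [dEnergy, hac, Ioc_eq_empty_of_le hT.le]
  rw [dEnergy, mEnergyA, if_pos hac, if_pos hac]
  refine (lintegral_sq_deriv_le_of_gradient (U := Ga a) (b := fun x j => 2 * phiA a x j) hT
    (hac.absolutelyContinuousOnInterval hT) (fun t ht => contDiffAt_Ga a (hθ t ht))
    fun t ht => hasFDerivAt_Ga a (hθ t ht)).trans ?_
  gcongr
  exact sub_le_self _ (Ga_nonneg ha _)

-- `Fprod (θ t) ≠ 0` says that the points are pairwise distinct modulo `2π`.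
theorem finite_multiradial_energy_finite_dirichlet_energy_general {n : ℕ} {a : ℝ} (ha : 0 ≤ a)
    {θ : ℝ → Fin n → ℝ} (hθ : ∀ t ∈ Ici (0 : ℝ), Fprod (θ t) ≠ 0) :
    dEnergyInf n θ ≤ mEnergyAInf n a θ + ENNReal.ofReal (Ga a (θ 0)) :=
  iSup_le fun T => (dEnergy_le_mEnergyA_add_Ga ha fun t ht => hθ t ht.1).trans <| by
    gcongr
    exact le_iSup (mEnergyA n a · θ) T

/-- If `J^a(θ) < ∞` then the Dirichlet energy is finite; more precisely
`E(θ) ≤ J^a(θ) + G_a(θ_0)`. -/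
theorem finite_multiradial_energy_finite_dirichlet_energy
    (n : ℕ) (hn : 1 ≤ n) (a : ℝ) (ha : 0 < a) (θ : ℝ → Fin n → ℝ)
    (hcont : ContinuousOn θ (Ici 0))
    (hX : ∀ t ∈ Ici (0 : ℝ), θ t ∈ Xspace n)
    (hJ : mEnergyAInf n a θ < ⊤) :
    dEnergyInf n θ < ⊤ ∧
      dEnergyInf n θ ≤ mEnergyAInf n a θ + ENNReal.ofReal (Ga a (θ 0)) := by
  have hle := finite_multiradial_energy_finite_dirichlet_energy_general ha.le
    fun t ht => Fprod_ne_zero_of_mem_Xspace (hX t ht)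
  exact ⟨hle.trans_lt (ENNReal.add_lt_top.2 ⟨hJ, ENNReal.ofReal_lt_top⟩), hle⟩

end
end
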